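/- Let d ≥ 1, n ≥ 1, k ≥ 2, and suppose {φ_{A,a}}_{a=0}^{d-1} (A = 0,…,k−1) are k mutually unbiased orthonormal bases of ℂ^d (i.e. EuclideanSpace ℂ (Fin d)). Let s : Fin (n·d²) → Fin k → Fin d be an orthogonal array OA_n(k,d). Define vectors Φ_{A,a} in EuclideanSpace ℂ (Fin (n·d) × Fin d) by Φ_{A,a}(i,j) = conj(φ_{A,a}(i))·φ_{A,a}(j) for i < d and Φ_{A,a}(i,j) = 0 for i ≥ d. Then there exists an orthonormal basis (e_I)_{I ∈ Fin (n·d²)} of EuclideanSpace ℂ (Fin (n·d) × Fin d) such that ⟨e_I, Φ_{A,a}⟩ = 0 whenever s(I)(A) ≠ a. -/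

import Mathlib

open scoped InnerProductSpace

/-- Two families with the same Gram matrix in a finite-dimensional inner product space differ by a
linear isometry. -/
theorem exists_linearIsometry_of_inner_eq {ι E : Type*} [Fintype ι] [NormedAddCommGroup E]
    [InnerProductSpace ℂ E] [FiniteDimensional ℂ E] (v w : ι → E)
    (h : ∀ i j, ⟪v i, v j⟫_ℂ = ⟪w i, w j⟫_ℂ) :
    ∃ L : E →ₗᵢ[ℂ] E, ∀ i, L (v i) = w i := by
  classical
  set T := Fintype.linearCombination ℂ v with hT
  set U := Fintype.linearCombination ℂ w with hU
  have hnorm (x : ι → ℂ) : ‖U x‖ = ‖T x‖ := by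
    rw [@norm_eq_sqrt_re_inner ℂ, @norm_eq_sqrt_re_inner ℂ]
    simp only [hT, hU, Fintype.linearCombination_apply, sum_inner, inner_sum, inner_smul_left,
      inner_smul_right, h]
  obtain ⟨g, hg⟩ := T.rangeRestrict.exists_rightInverse_of_surjective T.range_rangeRestrict
  have hTg (y : LinearMap.range T) : T (g y) = y :=
    congrArg Subtype.val (LinearMap.congr_fun hg y)
  let L₀ : LinearMap.range T →ₗᵢ[ℂ] E :=
    { toLinearMap := U ∘ₗ g
      norm_map' := fun y => by
        simp only [LinearMap.comp_apply, hnorm, hTg, Submodule.coe_norm] }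
  have hL₀ (x : ι → ℂ) : L₀ (T.rangeRestrict x) = U x := by
    change U (g (T.rangeRestrict x)) = U x
    rw [← sub_eq_zero, ← map_sub, ← norm_eq_zero, hnorm, map_sub, hTg]
    simp
  refine ⟨L₀.extend, fun i => ?_⟩
  have hv : ((T.rangeRestrict (Pi.single i 1) : LinearMap.range T) : E) = v i := by
    simp [hT]
  rw [← hv, LinearIsometry.extend_apply, hL₀]
  simp [hU]

/-- In an orthogonal array with at least two columns, each symbol appears `n * d` times in each
column. -/
theorem card_filter_column_eq {R K : Type*} [Fintype R] [Nontrivial K] {d n : ℕ}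
    (s : R → K → Fin d)
    (hOA : ∀ A A' : K, A ≠ A' → ∀ a a' : Fin d,
      (Finset.univ.filter (fun I : R => s I A = a ∧ s I A' = a')).card = n)
    (A : K) (a : Fin d) :
    (Finset.univ.filter (fun I : R => s I A = a)).card = n * d := by
  obtain ⟨A', hA'⟩ := exists_ne A
  rw [Finset.card_eq_sum_card_fiberwise (f := fun I => s I A') (t := Finset.univ)
    (fun _ _ => Finset.mem_coe.2 (Finset.mem_univ _))]
  simp [Finset.filter_filter, hOA A A' hA'.symm, mul_comm]

/-- The inner product of the vectors `conj x ⊗ x` and `conj y ⊗ y`, embedded in a space with a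
larger first factor, is `|⟨x, y⟩|²`. -/
theorem inner_conj_tensor_eq {d m : ℕ} (hdm : d ≤ m) (x y : EuclideanSpace ℂ (Fin d))
    (X Y : EuclideanSpace ℂ (Fin m × Fin d))
    (hX : ∀ (i : Fin m) (j : Fin d),
      X (i, j) = if h : (i : ℕ) < d then (starRingEnd ℂ) (x ⟨i, h⟩) * x j else 0)
    (hY : ∀ (i : Fin m) (j : Fin d),
      Y (i, j) = if h : (i : ℕ) < d then (starRingEnd ℂ) (y ⟨i, h⟩) * y j else 0) :
    ⟪X, Y⟫_ℂ = ((‖⟪x, y⟫_ℂ‖ ^ 2 : ℝ) : ℂ) := by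
  have hsum : ⟪X, Y⟫_ℂ = ∑ i : Fin d, ∑ j : Fin d,
      (x i * (starRingEnd ℂ) (y i)) * (y j * (starRingEnd ℂ) (x j)) := by
    rw [PiLp.inner_apply, Fintype.sum_prod_type]
    symm
    refine Finset.sum_of_injOn (Fin.castLE hdm) (Fin.castLE_injective hdm).injOn
      (fun _ _ => Finset.mem_coe.2 (Finset.mem_univ _)) (fun i _ hi => ?_) (fun i _ => ?_)
    · have hid : ¬ (i : ℕ) < d := fun h => hi ⟨⟨i, h⟩, by simp, by ext; simp⟩
      simp [hX, hid]
    · refine Finset.sum_congr rfl fun j _ => ?_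
      simp only [hX, hY, RCLike.inner_apply, Fin.val_castLE, Fin.is_lt, dif_pos, Fin.eta, map_mul,
        Complex.conj_conj]
      ring
  rw [hsum, ← Finset.sum_mul_sum]
  have hxy : ⟪x, y⟫_ℂ = ∑ j, y j * (starRingEnd ℂ) (x j) := by
    simp [PiLp.inner_apply]
  have hyx : (starRingEnd ℂ) ⟪x, y⟫_ℂ = ∑ j, x j * (starRingEnd ℂ) (y j) := by
    simp [hxy, map_sum, mul_comm]
  rw [← hxy, ← hyx, Complex.conj_mul']
  push_cast
  rfl

/-- **Mean King's problem solution from an orthogonal array.**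
Given `k` mutually unbiased orthonormal bases of `ℂ^d` and an orthogonal array
`OA_n(k,d)` used as estimation function, there exists an orthonormal basis of
`ℂ^{nd} ⊗ ℂ^d` satisfying the survival condition. -/
theorem mean_king_solution_of_orthogonal_array
    (d n k : ℕ) (hd : 1 ≤ d) (hn : 1 ≤ n) (hk : 2 ≤ k)
    (φ : Fin k → OrthonormalBasis (Fin d) ℂ (EuclideanSpace ℂ (Fin d)))
    (hMUB : ∀ A A' : Fin k, A ≠ A' → ∀ a a' : Fin d,
      ‖(⟪φ A a, φ A' a'⟫_ℂ)‖ ^ 2 = 1 / (d : ℝ))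
    (s : Fin (n * d ^ 2) → Fin k → Fin d)
    (hOA : ∀ A A' : Fin k, A ≠ A' → ∀ a a' : Fin d,
      (Finset.univ.filter (fun I : Fin (n * d ^ 2) => s I A = a ∧ s I A' = a')).card = n)
    (Φ : Fin k → Fin d → EuclideanSpace ℂ (Fin (n * d) × Fin d))
    (hΦ : ∀ (A : Fin k) (a : Fin d) (i : Fin (n * d)) (j : Fin d),
      Φ A a (i, j) =
        if h : (i : ℕ) < d then (starRingEnd ℂ) (φ A a ⟨i, h⟩) * φ A a j else 0) :
    ∃ e : OrthonormalBasis (Fin (n * d ^ 2)) ℂ (EuclideanSpace ℂ (Fin (n * d) × Fin d)),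
      ∀ (I : Fin (n * d ^ 2)) (A : Fin k) (a : Fin d),
        s I A ≠ a → ⟪e I, Φ A a⟫_ℂ = 0 := by
  have hd0 : (d : ℂ) ≠ 0 := by exact_mod_cast (by omega : d ≠ 0)
  have hn0 : (n : ℂ) ≠ 0 := by exact_mod_cast (by omega : n ≠ 0)
  have : Nontrivial (Fin k) := Fin.nontrivial_iff_two_le.2 hk
  have hdim : Fintype.card (Fin (n * d) × Fin d) = Fintype.card (Fin (n * d ^ 2)) := by
    simp only [Fintype.card_prod, Fintype.card_fin]
    ring
  let b := (EuclideanSpace.basisFun (Fin (n * d) × Fin d) ℂ).reindex (Fintype.equivOfCardEq hdim)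
  let c : ℂ := ((Real.sqrt (n * d))⁻¹ : ℝ)
  have hc : (starRingEnd ℂ) c * c = ((n : ℂ) * d)⁻¹ := by
    have h : (Real.sqrt (n * d))⁻¹ * (Real.sqrt (n * d))⁻¹ = ((n : ℝ) * d)⁻¹ := by
      rw [← mul_inv, Real.mul_self_sqrt (by positivity)]
    simp only [c, Complex.conj_ofReal, ← Complex.ofReal_mul, h]
    push_cast
    rfl
  let v : Fin k × Fin d → EuclideanSpace ℂ (Fin (n * d) × Fin d) :=
    fun p => ∑ I, (if s I p.1 = p.2 then c else 0) • b I
  have hv (p q : Fin k × Fin d) : ⟪v p, v q⟫_ℂ = ((n : ℂ) * d)⁻¹ *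
      (Finset.univ.filter (fun I => s I p.1 = p.2 ∧ s I q.1 = q.2)).card := by
    rw [b.orthonormal.inner_sum, ← hc, mul_comm (_ * c), ← nsmul_eq_mul, ← Finset.sum_const,
      Finset.sum_filter]
    refine Finset.sum_congr rfl fun I _ => ?_
    by_cases hp : s I p.1 = p.2 <;> by_cases hq : s I q.1 = q.2 <;> simp [hp, hq]
  obtain ⟨L, hL⟩ := exists_linearIsometry_of_inner_eq v (fun p => Φ p.1 p.2) fun p q => by
    rw [hv, inner_conj_tensor_eq (Nat.le_mul_of_pos_left d hn) (φ p.1 p.2) (φ q.1 q.2) _ _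
      (hΦ p.1 p.2) (hΦ q.1 q.2)]
    obtain ⟨A, a⟩ := p
    obtain ⟨A', a'⟩ := q
    by_cases hA : A = A'
    · subst hA
      by_cases ha : a = a'
      · subst ha
        simp only [and_self, card_filter_column_eq s hOA]
        simp
        field_simp
      · have hempty : Finset.univ.filter (fun I => s I A = a ∧ s I A = a') = ∅ :=
          Finset.filter_eq_empty_iff.2 fun I _ h => ha (h.1.symm.trans h.2)
        simp [hempty, (φ A).inner_eq_ite, ha]
    · simp only [hOA A A' hA, hMUB A A' hA]
      push_cast
      field_simp
  refine ⟨b.map (L.toLinearIsometryEquiv rfl), fun I A a hI => ?_⟩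
  rw [← hL (A, a), OrthonormalBasis.map_apply, LinearIsometry.coe_toLinearIsometryEquiv,
    L.inner_map_map, b.orthonormal.inner_right_fintype]
  exact if_neg hI
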